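/- The family (e_{a,i,r}), for a ∈ A and i ∈ I_{≤[r]}, is a Banach basis of C^r(𝒪_F,E): the map c₀(A×I_{≤[r]}) → C^r(𝒪_F,E) sending (b_{a,i}) to Σ_{a∈A} Σ_{i∈I_{≤[r]}} b_{a,i}·e_{a,i,r} is an isomorphism of Banach spaces. -/

import Mathlib

/-!
Setting (cf. the paper's notations): `O` plays the role of the ring of integers `𝒪_F` of a
finite extension `F` of `ℚ_p`, `E` is the coefficient field (a finite extension of `ℚ_p`
with its p-adic absolute value, normalized by `|x| = p^{-val_F(x)}`, `val_F(p) = [F:ℚ_p]`),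
`S` is the (finite) set of `ℚ_p`-algebra embeddings `F ↪ E`, restricted here to `O`,
`ν : O → ℝ` is the absolute value on `O` (the common restriction of the norm of `E` along any
embedding), `ϖ` is a fixed uniformizer with `ν ϖ = q⁻¹` where `q = p^f` is the cardinality
of the residue field, and `u * ϖ ^ e = p` records the ramification index `e`.
-/

open scoped Classical

noncomputable section

namespace CrPaper

structure Setting (S O E : Type*) [Fintype S] [CommRing O] [NormedField E] where
  q : ℝ
  p : ℕ
  fdeg : ℕ
  hp : p.Prime
  hfdeg : 0 < fdeg
  hq : q = (p : ℝ) ^ fdeg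
  emb : S → O →+* E
  emb_inj : ∀ s, Function.Injective (emb s)
  emb_distinct : Function.Injective emb
  ν : O → ℝ
  norm_emb : ∀ (s) (z : O), ‖emb s z‖ = ν z
  norm_le_one : ∀ (s) (z : O), ‖emb s z‖ ≤ 1
  norm_add_max : ∀ x y : E, ‖x + y‖ ≤ max ‖x‖ ‖y‖
  ϖ : O
  ν_ϖ : ν ϖ = q⁻¹
  mem_ball_iff : ∀ (y : O) (n : ℕ), (∃ z, y = ϖ ^ n * z) ↔ ν y ≤ q⁻¹ ^ n
  ram : ∃ (e : ℕ) (u : O), 0 < e ∧ IsUnit u ∧ u * ϖ ^ e = (p : O)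

variable {S O E : Type*} [Fintype S] [DecidableEq S] [CommRing O] [IsDomain O]
  [NormedField E] [CompleteSpace E] [CharZero E]

/-- The total weight `|i| = ∑ i_σ` of a multi-index. -/
def wt (i : S → ℕ) : ℕ := ∑ s, i s

/-- `i! = ∏ i_σ!` for a multi-index. -/
def mfact (i : S → ℕ) : ℕ := ∏ s, (i s).factorial

/-- The (finite) set `I_{≤N}` of multi-indices of total weight `≤ N`. -/
def Idx (S : Type*) [Fintype S] [DecidableEq S] (N : ℕ) : Finset (S → ℕ) :=
  (Fintype.piFinset fun _ : S => Finset.range (N + 1)).filter fun i => wt i ≤ N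

/-- `z^i = ∏_σ σ(z)^{i_σ}`. -/
def mpow (St : Setting S O E) (z : O) (i : S → ℕ) : E := ∏ s, St.emb s z ^ i s

/-- The Taylor remainder `ε_{f,N}(x,y) = f(x+y) − ∑_{|i|≤N} D_i f(x) y^i / i!`. -/
def epsTay (St : Setting S O E) (N : ℕ) (f : O → E) (D : (S → ℕ) → O → E) (x y : O) : E :=
  f (x + y) - ∑ i ∈ Idx S N, D i x * mpow St y i / (mfact i : E)

/-- `f` is of class `C^r` with the family of bounded functions `D` witnessing the
definition: all `D_i` (`|i| ≤ ⌊r⌋`) are bounded and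
`C_{f,r}(h) = sup_{x ∈ O, y ∈ ϖ^h O} |ε_{f,⌊r⌋}(x,y)| q^{rh} → 0` as `h → ∞`. -/
def IsCrWith (St : Setting S O E) (r : ℝ) (f : O → E) (D : (S → ℕ) → O → E) : Prop :=
  (∀ i ∈ Idx S ⌊r⌋₊, ∃ C : ℝ, ∀ x : O, ‖D i x‖ ≤ C) ∧
  ∀ ε : ℝ, 0 < ε → ∃ M : ℕ, ∀ h : ℕ, M ≤ h → ∀ x z : O,
    ‖epsTay St ⌊r⌋₊ f D x (St.ϖ ^ h * z)‖ * St.q ^ (r * (h : ℝ)) ≤ ε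

/-- `f` is of class `C^r`. -/
def IsCr (St : Setting S O E) (r : ℝ) (f : O → E) : Prop :=
  ∃ D, IsCrWith St r f D

/-- The `C^r`-norm of `f` (relative to the — unique — family `D`):
`max( sup_{i,x} |D_i f(x)/i!| , sup_{x,y} |ε_{f,⌊r⌋}(x,y)|/|y|^r )`. -/
def CrNorm (St : Setting S O E) (r : ℝ) (f : O → E) (D : (S → ℕ) → O → E) : ℝ :=
  max (⨆ i : (Idx S ⌊r⌋₊), ⨆ x : O, ‖D i.1 x / (mfact i.1 : E)‖)
      (⨆ x : O, ⨆ y : O, ‖epsTay St ⌊r⌋₊ f D x y‖ / St.ν y ^ r)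

/-- A compatible system of representatives `A_h` of `O/ϖ^h O` with `A_0 = {0}` and
`A_h ⊆ A_{h+1}`. -/
structure RepSystem (St : Setting S O E) where
  A : ℕ → Finset O
  hA0 : A 0 = {0}
  hmono : ∀ h : ℕ, A h ⊆ A (h + 1)
  hrep : ∀ (h : ℕ) (z : O), ∃! a : O, a ∈ A h ∧ ∃ y : O, z = a + St.ϖ ^ h * y

/-- `A = ⋃_h A_h`. -/
def Aall (St : Setting S O E) (R : RepSystem St) : Set O := ⋃ h : ℕ, (R.A h : Set O)

/-- `l(a)`: the smallest `n` with `a ∈ A_n`. -/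
def lA (St : Setting S O E) (R : RepSystem St) (a : O) : ℕ := sInf {n : ℕ | a ∈ R.A n}

/-- The function `z ↦ 1_{a+ϖ^n O}(z) ((z−a)/ϖ^n)^i` : it takes the value `y^i` at
`z = a + ϖ^n y` and `0` outside the coset `a + ϖ^n O`. -/
def coeval (St : Setting S O E) (a : O) (n : ℕ) (i : S → ℕ) : O → E := fun z =>
  if hz : ∃ y : O, z = a + St.ϖ ^ n * y then mpow St hz.choose i else 0

/-- The function `e_{a,i,r}(z) = ρ(ϖ)^{[l(a)r]} 1_{a+ϖ^{l(a)}O}(z) ((z−a)/ϖ^{l(a)})^i`. -/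
def ebasis (St : Setting S O E) (R : RepSystem St) (ρ : O →+* E) (r : ℝ) (a : O)
    (i : S → ℕ) : O → E := fun z =>
  ρ St.ϖ ^ ⌊(lA St R a : ℝ) * r⌋₊ * coeval St a (lA St R a) i z

/-- The `c₀` condition: `b` vanishes at infinity. -/
def c0Fun {ι : Type*} (b : ι → E) : Prop := ∀ ε : ℝ, 0 < ε → {x : ι | ε ≤ ‖b x‖}.Finite

set_option linter.unusedSectionVars false

/-! ### Basic facts -/

section basic

theorem q_gt_one (St : Setting S O E) : 1 < St.q := by
  rw [St.hq]
  have h1 : (1 : ℝ) < St.p := by exact_mod_cast St.hp.one_lt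
  exact one_lt_pow₀ h1 St.hfdeg.ne'

theorem q_pos (St : Setting S O E) : 0 < St.q := lt_trans one_pos (q_gt_one St)

theorem ultra (St : Setting S O E) : IsUltrametricDist E :=
  IsUltrametricDist.isUltrametricDist_of_forall_norm_add_le_max_norm St.norm_add_max

theorem emb_pi_ne (St : Setting S O E) (s : S) : St.emb s St.ϖ ≠ 0 := by
  rw [← norm_ne_zero_iff, St.norm_emb, St.ν_ϖ]
  exact inv_ne_zero (q_pos St).ne'

theorem pi_ne (St : Setting S O E) (ρ : O →+* E) (hρ : ∀ z : O, ‖ρ z‖ = St.ν z) : St.ϖ ≠ 0 := by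
  intro h
  have h1 := hρ St.ϖ
  rw [h, map_zero, norm_zero, ← h, St.ν_ϖ] at h1
  exact inv_ne_zero (q_pos St).ne' h1.symm

theorem ν_nonneg (St : Setting S O E) (ρ : O →+* E) (hρ : ∀ z : O, ‖ρ z‖ = St.ν z) (z : O) :
    0 ≤ St.ν z := by rw [← hρ]; exact norm_nonneg _

theorem ν_le_one (St : Setting S O E) (z : O) : St.ν z ≤ 1 := by
  simpa using (St.mem_ball_iff z 0).1 ⟨z, by simp⟩

theorem ν_zero (St : Setting S O E) (ρ : O →+* E) (hρ : ∀ z : O, ‖ρ z‖ = St.ν z) :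
    St.ν 0 = 0 := by rw [← hρ]; simp

theorem mpow_mul (St : Setting S O E) (x y : O) (i : S → ℕ) :
    mpow St (x * y) i = mpow St x i * mpow St y i := by
  simp [mpow, mul_pow, Finset.prod_mul_distrib]

theorem norm_mpow (St : Setting S O E) (z : O) (i : S → ℕ) :
    ‖mpow St z i‖ = St.ν z ^ wt i := by
  simp [mpow, norm_prod, norm_pow, St.norm_emb, wt, Finset.prod_pow_eq_pow_sum]

theorem mpow_pi_ne (St : Setting S O E) (n : ℕ) (i : S → ℕ) : mpow St (St.ϖ ^ n) i ≠ 0 := by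
  unfold mpow
  refine Finset.prod_ne_zero_iff.2 fun s _ => pow_ne_zero _ ?_
  rw [map_pow]
  exact pow_ne_zero _ (emb_pi_ne St s)

theorem norm_mpow_pi (St : Setting S O E) (n : ℕ) (i : S → ℕ) :
    ‖mpow St (St.ϖ ^ n) i‖ = (St.q⁻¹ ^ n) ^ wt i := by
  unfold mpow
  simp only [map_pow, norm_prod, norm_pow, St.norm_emb, St.ν_ϖ, wt, Finset.prod_pow_eq_pow_sum]

theorem norm_mpow_le_one (St : Setting S O E) (z : O) (i : S → ℕ) : ‖mpow St z i‖ ≤ 1 := by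
  unfold mpow
  rw [norm_prod]
  refine Finset.prod_le_one (fun _ _ => norm_nonneg _) fun s _ => ?_
  rw [norm_pow]
  exact pow_le_one₀ (norm_nonneg _) (St.norm_le_one s z)

theorem mem_Idx {N : ℕ} {i : S → ℕ} : i ∈ Idx S N ↔ wt i ≤ N := by
  unfold Idx
  simp only [Finset.mem_filter, Fintype.mem_piFinset, Finset.mem_range, and_iff_right_iff_imp]
  intro h s
  have : i s ≤ wt i := Finset.single_le_sum (f := i) (fun _ _ => Nat.zero_le _) (Finset.mem_univ s)
  omega

theorem coeval_mem (St : Setting S O E) (ρ : O →+* E) (hρ : ∀ z : O, ‖ρ z‖ = St.ν z)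
    (a : O) (n : ℕ) (i : S → ℕ) (y : O) : coeval St a n i (a + St.ϖ ^ n * y) = mpow St y i := by
  unfold coeval
  have hz : ∃ y' : O, a + St.ϖ ^ n * y = a + St.ϖ ^ n * y' := ⟨y, rfl⟩
  rw [dif_pos hz]
  have h1 := hz.choose_spec
  have h2 := mul_left_cancel₀ (pow_ne_zero n (pi_ne St ρ hρ)) (add_left_cancel h1)
  rw [← h2]

theorem coeval_not_mem (St : Setting S O E) (a : O) (n : ℕ) (i : S → ℕ) (z : O)
    (h : ¬ ∃ y, z = a + St.ϖ ^ n * y) : coeval St a n i z = 0 := dif_neg h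

theorem norm_coeval_le (St : Setting S O E) (a : O) (n : ℕ) (i : S → ℕ) (z : O) :
    ‖coeval St a n i z‖ ≤ 1 := by
  unfold coeval
  split_ifs with h
  · exact norm_mpow_le_one St _ _
  · simp

/-- multi-binomial coefficient -/
def mchoose (i k : S → ℕ) : ℕ := ∏ s, (i s).choose (k s)

theorem mpow_add (St : Setting S O E) (N : ℕ) (i : S → ℕ) (hi : i ∈ Idx S N) (u v : O) :
    mpow St (u + v) i =
      ∑ k ∈ Idx S N, (mchoose i k : E) * mpow St u (fun s => i s - k s) * mpow St v k := by
  have hle : ∀ s, i s ≤ N := fun s => by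
    have := mem_Idx.1 hi
    have : i s ≤ wt i :=
      Finset.single_le_sum (f := i) (fun _ _ => Nat.zero_le _) (Finset.mem_univ s)
    omega
  have h1 : mpow St (u + v) i = ∏ s, ∑ m ∈ Finset.range (N + 1),
      ((i s).choose m : E) * St.emb s u ^ (i s - m) * St.emb s v ^ m := by
    unfold mpow
    refine Finset.prod_congr rfl fun s _ => ?_
    rw [map_add, add_comm, add_pow]
    have hsub : Finset.range (i s + 1) ⊆ Finset.range (N + 1) :=
      Finset.range_subset_range.2 (by have := hle s; omega)
    rw [← Finset.sum_subset hsub]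
    · refine Finset.sum_congr rfl fun m _ => by ring
    · intro m _ hm
      have : i s < m := by simpa using hm
      simp [Nat.choose_eq_zero_of_lt this]
  rw [h1, Finset.prod_univ_sum]
  unfold Idx
  rw [Finset.sum_filter_of_ne]
  · refine Finset.sum_congr rfl fun k _ => ?_
    simp only [mpow, mchoose, Finset.prod_mul_distrib, Nat.cast_prod]
  · intro k _ hk
    by_contra hcon
    apply hk
    have : ∃ s, i s < k s := by
      by_contra h
      push Not at h
      have h2 : wt k ≤ wt i := Finset.sum_le_sum fun s _ => h s
      have := mem_Idx.1 hi
      omega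
    obtain ⟨s, hs⟩ := this
    have : mchoose i k = 0 := Finset.prod_eq_zero (Finset.mem_univ s) (Nat.choose_eq_zero_of_lt hs)
    simp [this]

end basic

/-! ### Algebraic independence -/

section indep

theorem span_emb (St : Setting S O E) :
    Submodule.span E (Set.range fun z : O => fun s => St.emb s z) = ⊤ := by
  by_contra hne
  obtain ⟨f, hf, hle⟩ := Submodule.exists_le_ker_of_lt_top _ (lt_top_iff_ne_top.2 hne)
  apply hf
  have hli : LinearIndependent E (fun s => (St.emb s : O → E)) := by
    have := (linearIndependent_monoidHom O E).comp (fun s => (St.emb s : O →* E)) (by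
      intro s t hst
      apply St.emb_distinct
      ext z
      exact DFunLike.congr_fun hst z)
    exact this
  rw [Fintype.linearIndependent_iff] at hli
  have hz := hli (fun s => f (Pi.single s 1)) (by
    ext z
    have h1 : f (fun s => St.emb s z) = 0 := hle (Submodule.subset_span ⟨z, rfl⟩)
    rw [LinearMap.pi_apply_eq_sum_univ f] at h1
    simp only [Finset.sum_apply, Pi.smul_apply, smul_eq_mul, Pi.zero_apply]
    rw [← h1]
    refine Finset.sum_congr rfl fun s _ => ?_
    rw [smul_eq_mul, mul_comm]
    congr 2
    ext t
    simp [Pi.single_apply, eq_comm])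
  refine LinearMap.pi_ext' fun s => ?_
  ext
  simpa using hz s

open MvPolynomial in
theorem poly_vanish (St : Setting S O E) (v : S → E) :
    ∀ P : MvPolynomial S E, (∀ z : O, eval (fun s => St.emb s z) P = 0) →
      ∀ z : O, eval (fun s => St.emb s z + v s) P = 0 := by
  have hv : v ∈ Submodule.span E (Set.range fun z : O => fun s => St.emb s z) := by
    rw [span_emb]; trivial
  have hadd : ∀ v w : S → E, (∀ P : MvPolynomial S E, (∀ z : O, eval (fun s => St.emb s z) P = 0) →
      ∀ z : O, eval (fun s => St.emb s z + v s) P = 0) →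
      (∀ P : MvPolynomial S E, (∀ z : O, eval (fun s => St.emb s z) P = 0) →
      ∀ z : O, eval (fun s => St.emb s z + w s) P = 0) →
      (∀ P : MvPolynomial S E, (∀ z : O, eval (fun s => St.emb s z) P = 0) →
      ∀ z : O, eval (fun s => St.emb s z + (v + w) s) P = 0) := by
    intro v w hv hw P hP z
    have h1 : ∀ u : S → E, eval u (bind₁ (fun s => X s + C (v s)) P) =
        eval (fun s => u s + v s) P := by
      intro u
      rw [← MvPolynomial.coe_aeval_eq_eval, ← MvPolynomial.coe_aeval_eq_eval]
      simp only [RingHom.coe_coe, aeval_bind₁]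
      congr 2
      ext s
      simp
    have h2 := hw (bind₁ (fun s => X s + C (v s)) P) (fun z => by rw [h1]; exact hv P hP z) z
    rw [h1] at h2
    rw [← h2]
    congr 2
    ext s
    simp only [Pi.add_apply]
    ring
  induction hv using Submodule.span_induction with
  | mem v hv =>
    obtain ⟨y, rfl⟩ := hv
    intro P hP z
    simpa using hP (z + y)
  | zero => intro P hP z; simpa using hP z
  | add v w _ _ hv hw => exact hadd v w hv hw
  | smul t v _ hv =>
    intro P hP z
    have hn : ∀ n : ℕ, (∀ P : MvPolynomial S E, (∀ z : O, eval (fun s => St.emb s z) P = 0) →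
      ∀ z : O, eval (fun s => St.emb s z + ((n : E) • v) s) P = 0) := by
      intro n
      induction n with
      | zero => intro P hP z; simpa using hP z
      | succ n ih =>
        have := hadd _ _ ih hv
        rwa [Nat.cast_succ, add_smul, one_smul]
    let Q : Polynomial E := aeval (fun s => Polynomial.C (St.emb s z) +
      Polynomial.X * Polynomial.C (v s)) P
    have hQ : ∀ t : E, Q.eval t = eval (fun s => St.emb s z + (t • v) s) P := by
      intro t
      have : (Polynomial.aeval t).comp (aeval (fun s => Polynomial.C (St.emb s z) +
        Polynomial.X * Polynomial.C (v s))) = (aeval (fun s => St.emb s z + (t • v) s) :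
          MvPolynomial S E →ₐ[E] E) := by
        ext s
        simp
        ring
      have h2 := DFunLike.congr_fun this P
      rw [← MvPolynomial.coe_aeval_eq_eval, ← Polynomial.coe_aeval_eq_eval]
      exact h2
    have hQ0 : Q = 0 := by
      refine Polynomial.eq_zero_of_infinite_isRoot Q ?_
      refine Set.Infinite.mono ?_ (Set.infinite_range_of_injective (Nat.cast_injective (R := E)))
      rintro _ ⟨n, rfl⟩
      change Q.eval _ = 0
      rw [hQ]
      exact hn n P hP z
    rw [← hQ, hQ0, Polynomial.eval_zero]

open MvPolynomial in
theorem mpow_indep (St : Setting S O E) (N : ℕ) (c : (S → ℕ) → E)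
    (h : ∀ z : O, ∑ i ∈ Idx S N, c i * mpow St z i = 0) : ∀ i ∈ Idx S N, c i = 0 := by
  let P : MvPolynomial S E := ∑ i ∈ Idx S N, monomial (Finsupp.equivFunOnFinite.symm i) (c i)
  have hP : ∀ z : O, eval (fun s => St.emb s z) P = 0 := by
    intro z
    rw [← h z]
    simp only [P, map_sum, eval_monomial, mpow]
    refine Finset.sum_congr rfl fun i _ => ?_
    rw [Finsupp.prod_fintype _ _ (fun _ => pow_zero _)]
    simp
  have hP0 : P = 0 := by
    refine MvPolynomial.funext fun v => ?_
    have := poly_vanish St v P hP 0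
    simpa using this
  intro i hi
  have h1 : coeff (Finsupp.equivFunOnFinite.symm i) P = c i := by
    simp only [P, coeff_sum, coeff_monomial, Finsupp.equivFunOnFinite.symm.injective.eq_iff]
    simp [hi]
  rw [← h1, hP0, coeff_zero]

/-- Coefficients of a polynomial of degree `≤ N` are controlled by its sup norm on `O`. -/
theorem coeff_bound (St : Setting S O E) (N : ℕ) : ∃ K : ℝ, 0 ≤ K ∧ ∀ (c : (S → ℕ) → E) (M : ℝ),
    (∀ w : O, ‖∑ i ∈ Idx S N, c i * mpow St w i‖ ≤ M) → ∀ i ∈ Idx S N, ‖c i‖ ≤ K * M := by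
  have hspan : Submodule.span E (Set.range fun z : O => fun i : Idx S N => mpow St z i.1) = ⊤ := by
    by_contra hne
    obtain ⟨f, hf, hle⟩ := Submodule.exists_le_ker_of_lt_top _ (lt_top_iff_ne_top.2 hne)
    apply hf
    have hz := mpow_indep St N (fun i => if hi : i ∈ Idx S N then f (Pi.single ⟨i, hi⟩ 1) else 0) (by
      intro z
      have h1 : f (fun i : Idx S N => mpow St z i.1) = 0 := hle (Submodule.subset_span ⟨z, rfl⟩)
      rw [LinearMap.pi_apply_eq_sum_univ f] at h1
      rw [← h1, ← Finset.sum_coe_sort]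
      refine Finset.sum_congr rfl fun s _ => ?_
      rw [smul_eq_mul, mul_comm, dif_pos s.2]
      congr 2
      ext t
      simp [Pi.single_apply, eq_comm])
    refine LinearMap.pi_ext' fun s => ?_
    ext
    have := hz s.1 s.2
    rw [dif_pos s.2] at this
    simpa using this
  have hex : ∀ i : Idx S N, ∃ m : O →₀ E,
      (m.sum fun z t => t • (fun i : Idx S N => mpow St z i.1)) = Pi.single i 1 := by
    intro i
    have : (Pi.single i 1 : Idx S N → E) ∈
        Submodule.span E (Set.range fun z : O => fun i : Idx S N => mpow St z i.1) := by
      rw [hspan]; trivial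
    exact Finsupp.mem_span_range_iff_exists_finsupp.1 this
  choose m hm using hex
  refine ⟨∑ i, ∑ z ∈ (m i).support, ‖m i z‖, by positivity, ?_⟩
  intro c M hM i hi
  have hM0 : 0 ≤ M := le_trans (norm_nonneg _) (hM 0)
  have key : c i = ∑ z ∈ (m ⟨i, hi⟩).support, m ⟨i, hi⟩ z * ∑ k ∈ Idx S N, c k * mpow St z k := by
    have h1 := fun k => congrFun (hm ⟨i, hi⟩) k
    simp only [Finsupp.sum, Finset.sum_apply, Pi.smul_apply, smul_eq_mul] at h1
    simp_rw [Finset.mul_sum]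
    rw [Finset.sum_comm]
    rw [← Finset.sum_coe_sort (Idx S N)]
    have h2 : ∀ k : Idx S N, ∑ z ∈ (m ⟨i, hi⟩).support, m ⟨i, hi⟩ z * (c k * mpow St z k) =
        c k * (Pi.single (⟨i, hi⟩ : Idx S N) (1 : E) : Idx S N → E) k := by
      intro k
      rw [← h1 k, Finset.mul_sum]
      refine Finset.sum_congr rfl fun z _ => by ring
    rw [Finset.sum_congr rfl fun k _ => h2 k]
    simp [Pi.single_apply]
  rw [key]
  calc ‖∑ z ∈ (m ⟨i, hi⟩).support, m ⟨i, hi⟩ z * ∑ k ∈ Idx S N, c k * mpow St z k‖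
      ≤ ∑ z ∈ (m ⟨i, hi⟩).support, ‖m ⟨i, hi⟩ z‖ * M := by
        refine norm_sum_le_of_le _ fun z _ => ?_
        rw [norm_mul]
        exact mul_le_mul_of_nonneg_left (hM z) (norm_nonneg _)
    _ = (∑ z ∈ (m ⟨i, hi⟩).support, ‖m ⟨i, hi⟩ z‖) * M := by rw [Finset.sum_mul]
    _ ≤ _ := by
        refine mul_le_mul_of_nonneg_right ?_ hM0
        exact Finset.single_le_sum (f := fun i => ∑ z ∈ (m i).support, ‖m i z‖)
          (fun _ _ => by positivity) (Finset.mem_univ (⟨i, hi⟩ : Idx S N))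

end indep

/-! ### Taylor coefficients of the basis functions -/

section taylor

/-- Taylor coefficient `D_k/k!` of `coeval a n i`. -/
def dco (St : Setting S O E) (a : O) (n : ℕ) (i k : S → ℕ) (x : O) : E :=
  (mchoose i k : E) * coeval St a n (fun s => i s - k s) x / mpow St (St.ϖ ^ n) k

theorem dco_taylor (St : Setting S O E) (ρ : O →+* E) (hρ : ∀ z : O, ‖ρ z‖ = St.ν z)
    (N : ℕ) (i : S → ℕ) (hi : i ∈ Idx S N) (a : O) (n : ℕ) (x w : O) :
    coeval St a n i (x + St.ϖ ^ n * w) =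
      ∑ k ∈ Idx S N, dco St a n i k x * mpow St (St.ϖ ^ n * w) k := by
  by_cases hx : ∃ u, x = a + St.ϖ ^ n * u
  · obtain ⟨u, rfl⟩ := hx
    rw [add_assoc, ← mul_add, coeval_mem St ρ hρ, mpow_add St N i hi]
    refine Finset.sum_congr rfl fun k _ => ?_
    have := mpow_pi_ne St n k
    rw [dco, coeval_mem St ρ hρ, mpow_mul]
    field_simp
  · rw [coeval_not_mem]
    · symm
      refine Finset.sum_eq_zero fun k _ => ?_
      rw [dco, coeval_not_mem St a n _ x hx]
      simp
    · rintro ⟨y, hy⟩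
      exact hx ⟨y - w, by linear_combination hy⟩

theorem norm_dco_le (St : Setting S O E) (a : O) (n : ℕ) (i k : S → ℕ) (x : O) :
    ‖dco St a n i k x‖ ≤ ((St.q⁻¹ ^ n) ^ wt k)⁻¹ := by
  have := ultra St
  have hq := q_pos St
  rw [dco, norm_div, norm_mpow_pi, div_eq_mul_inv]
  refine mul_le_of_le_one_left (by positivity) ?_
  rw [norm_mul]
  exact mul_le_one₀ (IsUltrametricDist.norm_natCast_le_one E _) (norm_nonneg _)
    (norm_coeval_le St _ _ _ _)

theorem norm_rho_pow_le (St : Setting S O E) (ρ : O →+* E) (hρ : ∀ z : O, ‖ρ z‖ = St.ν z)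
    (r : ℝ) (n : ℕ) :
    ‖ρ St.ϖ ^ ⌊(n : ℝ) * r⌋₊‖ ≤ St.q * (St.q⁻¹ ^ n) ^ r := by
  have hq := q_pos St
  have hq1 := q_gt_one St
  rw [norm_pow, hρ, St.ν_ϖ, ← Real.rpow_natCast, ← Real.rpow_natCast, Real.inv_rpow hq.le,
    Real.inv_rpow hq.le, ← Real.rpow_neg hq.le, ← Real.rpow_neg hq.le, ← Real.rpow_mul hq.le]
  nth_rewrite 2 [← Real.rpow_one St.q]
  rw [← Real.rpow_add hq]
  refine Real.rpow_le_rpow_of_exponent_le hq1.le ?_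
  have := (Nat.lt_floor_add_one ((n : ℝ) * r)).le
  linarith

theorem norm_rho_pow_ge (St : Setting S O E) (ρ : O →+* E) (hρ : ∀ z : O, ‖ρ z‖ = St.ν z)
    (r : ℝ) (hr : 0 ≤ r) (n : ℕ) :
    (St.q⁻¹ ^ n) ^ r ≤ ‖ρ St.ϖ ^ ⌊(n : ℝ) * r⌋₊‖ := by
  have hq := q_pos St
  have hq1 := q_gt_one St
  rw [norm_pow, hρ, St.ν_ϖ, ← Real.rpow_natCast, ← Real.rpow_natCast, Real.inv_rpow hq.le,
    Real.inv_rpow hq.le, ← Real.rpow_neg hq.le, ← Real.rpow_neg hq.le, ← Real.rpow_mul hq.le]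
  refine Real.rpow_le_rpow_of_exponent_le hq1.le ?_
  have := Nat.floor_le (a := (n : ℝ) * r) (by positivity)
  linarith

theorem rho_pow_ne (St : Setting S O E) (ρ : O →+* E) (hρ : ∀ z : O, ‖ρ z‖ = St.ν z) (m : ℕ) :
    ρ St.ϖ ^ m ≠ 0 := by
  refine pow_ne_zero _ ?_
  rw [← norm_ne_zero_iff, hρ, St.ν_ϖ]
  exact inv_ne_zero (q_pos St).ne'

theorem norm_ebasis_le (St : Setting S O E) (R : RepSystem St) (ρ : O →+* E)
    (hρ : ∀ z : O, ‖ρ z‖ = St.ν z) (r : ℝ) (a : O) (i : S → ℕ) (z : O) :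
    ‖ebasis St R ρ r a i z‖ ≤ 1 := by
  rw [ebasis, norm_mul, norm_pow, hρ]
  exact mul_le_one₀ (pow_le_one₀ (ν_nonneg St ρ hρ _) (ν_le_one St _)) (norm_nonneg _)
    (norm_coeval_le St _ _ _ _)

/-- Taylor coefficient of `ebasis`. -/
def eD (St : Setting S O E) (R : RepSystem St) (ρ : O →+* E) (r : ℝ) (a : O)
    (i k : S → ℕ) (x : O) : E :=
  ρ St.ϖ ^ ⌊(lA St R a : ℝ) * r⌋₊ * dco St a (lA St R a) i k x

theorem Idx_le {r : ℝ} (hr : 0 ≤ r) {k : S → ℕ} (hk : k ∈ Idx S ⌊r⌋₊) : (wt k : ℝ) ≤ r :=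
  le_trans (by exact_mod_cast mem_Idx.1 hk) (Nat.floor_le hr)

theorem qn_pos (St : Setting S O E) (n : ℕ) : 0 < St.q⁻¹ ^ n :=
  pow_pos (inv_pos.2 (q_pos St)) n

theorem qn_le_one (St : Setting S O E) (n : ℕ) : St.q⁻¹ ^ n ≤ 1 :=
  pow_le_one₀ (inv_pos.2 (q_pos St)).le (inv_le_one_of_one_le₀ (q_gt_one St).le)

theorem norm_eD_le' (St : Setting S O E) (R : RepSystem St) (ρ : O →+* E)
    (hρ : ∀ z : O, ‖ρ z‖ = St.ν z) (r : ℝ) (a : O) (i k : S → ℕ) (x : O) :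
    ‖eD St R ρ r a i k x‖ ≤ St.q * (St.q⁻¹ ^ (lA St R a)) ^ (r - wt k) := by
  have hs := qn_pos St (lA St R a)
  rw [eD, norm_mul, Real.rpow_sub hs, Real.rpow_natCast, div_eq_mul_inv, ← mul_assoc]
  exact mul_le_mul (norm_rho_pow_le St ρ hρ r _) (norm_dco_le St _ _ _ _ _) (norm_nonneg _)
    (mul_nonneg (q_pos St).le (Real.rpow_nonneg hs.le _))

theorem norm_eD_le (St : Setting S O E) (R : RepSystem St) (ρ : O →+* E)
    (hρ : ∀ z : O, ‖ρ z‖ = St.ν z) (r : ℝ) (hr : 0 ≤ r) (a : O) (i k : S → ℕ)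
    (hk : k ∈ Idx S ⌊r⌋₊) (x : O) :
    ‖eD St R ρ r a i k x‖ ≤ St.q := by
  refine (norm_eD_le' St R ρ hρ r a i k x).trans ?_
  refine mul_le_of_le_one_right (q_pos St).le ?_
  exact Real.rpow_le_one (qn_pos St _).le (qn_le_one St _) (by linarith [Idx_le hr hk])

/-- Taylor remainder of `ebasis`. -/
def eRem (St : Setting S O E) (R : RepSystem St) (ρ : O →+* E) (r : ℝ) (a : O)
    (i : S → ℕ) (x y : O) : E :=
  ebasis St R ρ r a i (x + y) - ∑ k ∈ Idx S ⌊r⌋₊, eD St R ρ r a i k x * mpow St y k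

theorem eRem_zero (St : Setting S O E) (R : RepSystem St) (ρ : O →+* E)
    (hρ : ∀ z : O, ‖ρ z‖ = St.ν z) (r : ℝ) (a : O) (i : S → ℕ)
    (hi : i ∈ Idx S ⌊r⌋₊) (x w : O) :
    eRem St R ρ r a i x (St.ϖ ^ (lA St R a) * w) = 0 := by
  simp only [eRem, ebasis, eD]
  rw [dco_taylor St ρ hρ _ i hi, Finset.mul_sum, sub_eq_zero]
  refine Finset.sum_congr rfl fun k _ => by ring

theorem norm_eRem_le (St : Setting S O E) (R : RepSystem St) (ρ : O →+* E)
    (hρ : ∀ z : O, ‖ρ z‖ = St.ν z) (r : ℝ) (hr : 0 ≤ r) (a : O) (i : S → ℕ)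
    (hi : i ∈ Idx S ⌊r⌋₊) (x y : O) :
    ‖eRem St R ρ r a i x y‖ ≤ St.q * St.ν y ^ r := by
  have := ultra St
  have hq := q_pos St
  have hν := ν_nonneg St ρ hρ y
  by_cases hy : ∃ w, y = St.ϖ ^ (lA St R a) * w
  · obtain ⟨w, hw⟩ := hy
    have h0 := eRem_zero St R ρ hρ r a i hi x w
    rw [← hw] at h0
    rw [h0, norm_zero]
    exact mul_nonneg hq.le (Real.rpow_nonneg hν _)
  · rw [St.mem_ball_iff, not_le] at hy
    have hs := qn_pos St (lA St R a)
    have ht : 0 < St.ν y := hs.trans hy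
    have h1 : ‖ebasis St R ρ r a i (x + y)‖ ≤ St.q * St.ν y ^ r := by
      rw [ebasis, norm_mul]
      calc _ ≤ (St.q * (St.q⁻¹ ^ (lA St R a)) ^ r) * 1 :=
            mul_le_mul (norm_rho_pow_le St ρ hρ r _) (norm_coeval_le St _ _ _ _) (norm_nonneg _)
              (mul_nonneg hq.le (Real.rpow_nonneg hs.le _))
        _ ≤ _ := by
            rw [mul_one]
            exact mul_le_mul_of_nonneg_left (Real.rpow_le_rpow hs.le hy.le hr) hq.le
    have h2 : ‖∑ k ∈ Idx S ⌊r⌋₊, eD St R ρ r a i k x * mpow St y k‖ ≤ St.q * St.ν y ^ r := by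
      refine IsUltrametricDist.norm_sum_le_of_forall_le_of_nonneg (by positivity) fun k hk => ?_
      rw [norm_mul, norm_mpow]
      have hk' := Idx_le hr hk
      calc _ ≤ (St.q * St.ν y ^ (r - wt k)) * St.ν y ^ wt k := by
            refine mul_le_mul_of_nonneg_right ?_ (by positivity)
            refine (norm_eD_le' St R ρ hρ r a i k x).trans ?_
            exact mul_le_mul_of_nonneg_left
              (Real.rpow_le_rpow hs.le hy.le (by linarith)) hq.le
        _ = _ := by
            rw [mul_assoc, ← Real.rpow_natCast, ← Real.rpow_add ht, sub_add_cancel]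
    rw [eRem, sub_eq_add_neg]
    refine (St.norm_add_max _ _).trans (max_le h1 ?_)
    rwa [norm_neg]

end taylor

/-! ### The map from `c₀` -/

section forward

abbrev Ix (St : Setting S O E) (R : RepSystem St) (r : ℝ) : Type _ :=
  {x : O × (S → ℕ) // x.1 ∈ Aall St R ∧ x.2 ∈ Idx S ⌊r⌋₊}

theorem c0_summable (St : Setting S O E) {ι : Type*} (b g : ι → E) (hb : c0Fun b) (C : ℝ)
    (hg : ∀ x, ‖g x‖ ≤ C) : Summable fun x => b x * g x := by
  have := ultra St
  refine NonarchimedeanAddGroup.summable_of_tendsto_cofinite_zero ?_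
  rw [Metric.tendsto_nhds]
  intro ε hε
  have hC : 0 < |C| + 1 := by positivity
  rw [Filter.eventually_cofinite]
  refine (hb (ε / (|C| + 1)) (by positivity)).subset fun x hx => ?_
  simp only [dist_zero_right, not_lt, Set.mem_ofPred_eq, norm_mul] at hx ⊢
  rw [div_le_iff₀ hC]
  refine hx.trans (mul_le_mul_of_nonneg_left ?_ (norm_nonneg _))
  exact (hg x).trans (by linarith [le_abs_self C])

theorem c0_bdd {ι : Type*} (b : ι → E) (hb : c0Fun b) : BddAbove (Set.range fun x => ‖b x‖) := by
  have h := ((hb 1 one_pos).image fun x => ‖b x‖).bddAbove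
  obtain ⟨B, hB⟩ := h
  refine ⟨max B 1, ?_⟩
  rintro _ ⟨x, rfl⟩
  by_cases hx : 1 ≤ ‖b x‖
  · exact (hB ⟨x, hx, rfl⟩).trans (le_max_left _ _)
  · exact (not_le.1 hx).le.trans (le_max_right _ _)

def Dsum (St : Setting S O E) (R : RepSystem St) (ρ : O →+* E) (r : ℝ) (b : Ix St R r → E)
    (k : S → ℕ) (x : O) : E :=
  (mfact k : E) * ∑' j, b j * eD St R ρ r j.1.1 j.1.2 k x

theorem mfact_ne (k : S → ℕ) : (mfact k : E) ≠ 0 := by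
  rw [Nat.cast_ne_zero]
  exact Finset.prod_ne_zero_iff.2 fun s _ => Nat.factorial_ne_zero _

theorem eps_eq (St : Setting S O E) (R : RepSystem St) (ρ : O →+* E)
    (hρ : ∀ z : O, ‖ρ z‖ = St.ν z) (r : ℝ) (hr : 0 ≤ r) (b : Ix St R r → E) (hb : c0Fun b)
    (x y : O) :
    epsTay St ⌊r⌋₊ (fun z => ∑' j, b j * ebasis St R ρ r j.1.1 j.1.2 z) (Dsum St R ρ r b) x y =
      ∑' j, b j * eRem St R ρ r j.1.1 j.1.2 x y := by
  have h1 := (c0_summable St b (fun j => ebasis St R ρ r j.1.1 j.1.2 (x + y)) hb 1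
    (fun j => norm_ebasis_le St R ρ hρ r _ _ _)).hasSum
  have h2 := fun k (hk : k ∈ Idx S ⌊r⌋₊) =>
    ((c0_summable St b (fun j => eD St R ρ r j.1.1 j.1.2 k x) hb St.q
    (fun j => norm_eD_le St R ρ hρ r hr _ _ k hk _)).hasSum).mul_right (mpow St y k)
  have h3 := (h1.sub (hasSum_sum h2)).tsum_eq
  rw [epsTay]
  have h4 : ∑ i ∈ Idx S ⌊r⌋₊, Dsum St R ρ r b i x * mpow St y i / (mfact i : E) =
      ∑ i ∈ Idx S ⌊r⌋₊, (∑' j, b j * eD St R ρ r j.1.1 j.1.2 i x) * mpow St y i := by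
    refine Finset.sum_congr rfl fun k _ => ?_
    have := mfact_ne (E := E) k
    rw [Dsum]
    field_simp
  rw [h4, ← h3]
  refine tsum_congr fun j => ?_
  rw [eRem, mul_sub, Finset.mul_sum]
  simp only [mul_assoc]

theorem qn_rpow_mul (St : Setting S O E) (r : ℝ) (h : ℕ) :
    (St.q⁻¹ ^ h) ^ r * St.q ^ (r * (h : ℝ)) = 1 := by
  have hq := q_pos St
  rw [← Real.rpow_natCast, Real.inv_rpow hq.le, ← Real.rpow_neg hq.le, ← Real.rpow_mul hq.le,
    ← Real.rpow_add hq]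
  ring_nf
  simp

theorem forward_isCr (St : Setting S O E) (R : RepSystem St) (ρ : O →+* E)
    (hρ : ∀ z : O, ‖ρ z‖ = St.ν z) (r : ℝ) (hr : 0 ≤ r) (b : Ix St R r → E) (hb : c0Fun b) :
    IsCrWith St r (fun z => ∑' j, b j * ebasis St R ρ r j.1.1 j.1.2 z) (Dsum St R ρ r b) := by
  have := ultra St
  have hq := q_pos St
  obtain ⟨B, hB⟩ := c0_bdd b hb
  have hB' : ∀ j, ‖b j‖ ≤ max B 0 := fun j => (hB ⟨j, rfl⟩).trans (le_max_left _ _)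
  constructor
  · intro k hk
    refine ⟨‖(mfact k : E)‖ * (max B 0 * St.q), fun x => ?_⟩
    rw [Dsum, norm_mul]
    refine mul_le_mul_of_nonneg_left ?_ (norm_nonneg _)
    refine IsUltrametricDist.norm_tsum_le_of_forall_le_of_nonneg (by positivity) fun j => ?_
    rw [norm_mul]
    exact mul_le_mul (hB' j) (norm_eD_le St R ρ hρ r hr _ _ k hk _) (norm_nonneg _)
      (le_max_right _ _)
  · intro ε hε
    have hfin := (hb (ε / St.q) (by positivity)).image fun j => lA St R j.1.1
    obtain ⟨M, hM⟩ := hfin.bddAbove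
    refine ⟨M, fun h hh x z => ?_⟩
    rw [eps_eq St R ρ hρ r hr b hb]
    have hle : ‖∑' j, b j * eRem St R ρ r j.1.1 j.1.2 x (St.ϖ ^ h * z)‖ ≤
        ε * (St.q⁻¹ ^ h) ^ r := by
      have hs := qn_pos St h
      refine IsUltrametricDist.norm_tsum_le_of_forall_le_of_nonneg (by positivity) fun j => ?_
      by_cases hj : ε / St.q ≤ ‖b j‖
      · have hl : lA St R j.1.1 ≤ M := hM ⟨j, hj, rfl⟩
        have : St.ϖ ^ h * z = St.ϖ ^ (lA St R j.1.1) * (St.ϖ ^ (h - lA St R j.1.1) * z) := by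
          rw [← mul_assoc, ← pow_add]
          congr 2
          omega
        rw [this, eRem_zero St R ρ hρ r _ _ j.2.2, mul_zero, norm_zero]
        positivity
      · rw [norm_mul]
        have hν : St.ν (St.ϖ ^ h * z) ≤ St.q⁻¹ ^ h := (St.mem_ball_iff _ _).1 ⟨z, rfl⟩
        have h0 := ν_nonneg St ρ hρ (St.ϖ ^ h * z)
        calc _ ≤ (ε / St.q) * (St.q * St.ν (St.ϖ ^ h * z) ^ r) :=
              mul_le_mul (not_le.1 hj).le (norm_eRem_le St R ρ hρ r hr _ _ j.2.2 _ _)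
                (norm_nonneg _) (by positivity)
          _ = ε * St.ν (St.ϖ ^ h * z) ^ r := by field_simp
          _ ≤ _ := mul_le_mul_of_nonneg_left (Real.rpow_le_rpow h0 hν hr) hε.le
    calc _ ≤ ε * (St.q⁻¹ ^ h) ^ r * St.q ^ (r * (h : ℝ)) :=
          mul_le_mul_of_nonneg_right hle (Real.rpow_nonneg hq.le _)
      _ = ε := by rw [mul_assoc, qn_rpow_mul, mul_one]

theorem forward_norm (St : Setting S O E) (R : RepSystem St) (ρ : O →+* E)
    (hρ : ∀ z : O, ‖ρ z‖ = St.ν z) (r : ℝ) (hr : 0 ≤ r) (b : Ix St R r → E) (hb : c0Fun b) :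
    CrNorm St r (fun z => ∑' j, b j * ebasis St R ρ r j.1.1 j.1.2 z) (Dsum St R ρ r b) ≤
      St.q * ⨆ j, ‖b j‖ := by
  have := ultra St
  have hq := q_pos St
  have hB' : ∀ j, ‖b j‖ ≤ ⨆ j, ‖b j‖ := fun j => le_ciSup (c0_bdd b hb) j
  have hB0 : 0 ≤ ⨆ j, ‖b j‖ := Real.iSup_nonneg fun j => norm_nonneg _
  refine max_le ?_ ?_
  · refine Real.iSup_le (fun k => Real.iSup_le (fun x => ?_) (by positivity)) (by positivity)
    rw [Dsum, mul_div_cancel_left₀ _ (mfact_ne _)]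
    refine IsUltrametricDist.norm_tsum_le_of_forall_le_of_nonneg (by positivity) fun j => ?_
    rw [norm_mul, mul_comm]
    exact mul_le_mul (norm_eD_le St R ρ hρ r hr _ _ k.1 k.2 _) (hB' j) (norm_nonneg _) hq.le
  · refine Real.iSup_le (fun x => Real.iSup_le (fun y => ?_) (by positivity)) (by positivity)
    rw [eps_eq St R ρ hρ r hr b hb]
    have h0 := ν_nonneg St ρ hρ y
    refine div_le_of_le_mul₀ (Real.rpow_nonneg h0 _) (by positivity) ?_
    have := Real.rpow_nonneg h0 r
    refine IsUltrametricDist.norm_tsum_le_of_forall_le_of_nonneg (by positivity) fun j => ?_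
    rw [norm_mul]
    calc _ ≤ (⨆ j, ‖b j‖) * (St.q * St.ν y ^ r) :=
          mul_le_mul (hB' j) (norm_eRem_le St R ρ hρ r hr _ _ j.2.2 _ _) (norm_nonneg _) hB0
      _ = _ := by ring

end forward

/-! ### Injectivity -/

section injective

theorem D_unique (St : Setting S O E) (r : ℝ) (hr : 0 ≤ r)
    (D : (S → ℕ) → O → E) (h : IsCrWith St r (fun _ => 0) D) (i : S → ℕ) (hi : i ∈ Idx S ⌊r⌋₊)
    (x : O) : D i x = 0 := by
  obtain ⟨K, hK, hc⟩ := coeff_bound St ⌊r⌋₊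
  have key : ∀ ε : ℝ, 0 < ε → ‖D i x / (mfact i : E)‖ ≤ K * ε := by
    intro ε hε
    obtain ⟨M, hM⟩ := h.2 ε hε
    have hs := qn_pos St M
    have h1 := hc (fun k => D k x / (mfact k : E) * mpow St (St.ϖ ^ M) k) (ε * (St.q⁻¹ ^ M) ^ r) (by
      intro w
      have h2 := hM M le_rfl x w
      rw [epsTay, zero_sub, norm_neg] at h2
      have h3 := qn_rpow_mul St r M
      have h4 := Real.rpow_pos_of_pos hs r
      have h5 : ∑ i ∈ Idx S ⌊r⌋₊, D i x * mpow St (St.ϖ ^ M * w) i / (mfact i : E) =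
          ∑ k ∈ Idx S ⌊r⌋₊, D k x / (mfact k : E) * mpow St (St.ϖ ^ M) k * mpow St w k :=
        Finset.sum_congr rfl fun k _ => by rw [mpow_mul]; ring
      rw [h5] at h2
      calc _ = (‖∑ k ∈ Idx S ⌊r⌋₊, D k x / (mfact k : E) * mpow St (St.ϖ ^ M) k * mpow St w k‖
            * St.q ^ (r * (M : ℝ))) * (St.q⁻¹ ^ M) ^ r := by
              rw [mul_assoc, mul_comm (St.q ^ _), h3, mul_one]
        _ ≤ _ := mul_le_mul_of_nonneg_right h2 h4.le) i hi
    rw [norm_mul, norm_mpow_pi] at h1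
    have h6 : (St.q⁻¹ ^ M) ^ r ≤ (St.q⁻¹ ^ M) ^ wt i := by
      rw [← Real.rpow_natCast _ (wt i)]
      exact Real.rpow_le_rpow_of_exponent_ge hs (qn_le_one St M) (Idx_le hr hi)
    have h7 : 0 < (St.q⁻¹ ^ M) ^ r := Real.rpow_pos_of_pos hs r
    have h8 : ‖D i x / (mfact i : E)‖ * (St.q⁻¹ ^ M) ^ r ≤ (K * ε) * (St.q⁻¹ ^ M) ^ r :=
      (mul_le_mul_of_nonneg_left h6 (norm_nonneg _)).trans (h1.trans_eq (by ring))
    exact le_of_mul_le_mul_right h8 h7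
  have h0 : ‖D i x / (mfact i : E)‖ ≤ 0 := by
    refine le_of_forall_pos_le_add fun ε hε => ?_
    refine (key (ε / (K + 1)) (by positivity)).trans ?_
    rw [zero_add, ← mul_div_assoc, div_le_iff₀ (by positivity)]
    nlinarith
  have h9 := norm_le_zero_iff.1 h0
  exact (div_eq_zero_iff.1 h9).resolve_right (mfact_ne i)

theorem A_mono (St : Setting S O E) (R : RepSystem St) : Monotone R.A :=
  monotone_nat_of_le_succ R.hmono

theorem lA_mem (St : Setting S O E) (R : RepSystem St) {a : O} (ha : a ∈ Aall St R) :
    a ∈ R.A (lA St R a) := by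
  obtain ⟨n, hn⟩ := Set.mem_iUnion.1 ha
  exact Nat.sInf_mem (s := {n : ℕ | a ∈ R.A n}) ⟨n, hn⟩

theorem lA_le (St : Setting S O E) (R : RepSystem St) {a : O} {n : ℕ} (ha : a ∈ R.A n) :
    lA St R a ≤ n := Nat.sInf_le ha

theorem rep_unique (St : Setting S O E) (R : RepSystem St) {n : ℕ} {z a a' y y' : O}
    (ha : a ∈ R.A n) (ha' : a' ∈ R.A n) (h : z = a + St.ϖ ^ n * y) (h' : z = a' + St.ϖ ^ n * y') :
    a = a' := (R.hrep n z).unique ⟨ha, y, h⟩ ⟨ha', y', h'⟩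

theorem eD_self (St : Setting S O E) (R : RepSystem St) (ρ : O →+* E)
    (hρ : ∀ z : O, ‖ρ z‖ = St.ν z) (r : ℝ) (a : O) (i k : S → ℕ) (hik : i ≠ k) :
    eD St R ρ r a i k a = 0 := by
  have h1 : coeval St a (lA St R a) (fun s => i s - k s) a = mpow St 0 (fun s => i s - k s) := by
    have := coeval_mem St ρ hρ a (lA St R a) (fun s => i s - k s) 0
    simpa using this
  rw [eD, dco, h1]
  by_cases hle : ∃ s, i s < k s
  · obtain ⟨s, hs⟩ := hle
    have : mchoose i k = 0 := Finset.prod_eq_zero (Finset.mem_univ s) (Nat.choose_eq_zero_of_lt hs)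
    simp [this]
  · push Not at hle
    have : ∃ s, k s < i s := by
      by_contra hcon
      push Not at hcon
      exact hik (funext fun s => le_antisymm (hcon s) (hle s))
    obtain ⟨s, hs⟩ := this
    have : mpow St 0 (fun s => i s - k s) = 0 := by
      refine Finset.prod_eq_zero (Finset.mem_univ s) ?_
      rw [map_zero]
      exact zero_pow (Nat.sub_ne_zero_of_lt hs)
    simp [this]

theorem eD_self_ne (St : Setting S O E) (R : RepSystem St) (ρ : O →+* E)
    (hρ : ∀ z : O, ‖ρ z‖ = St.ν z) (r : ℝ) (a : O) (k : S → ℕ) :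
    eD St R ρ r a k k a ≠ 0 := by
  have h1 : coeval St a (lA St R a) (fun s => k s - k s) a = mpow St 0 (fun s => k s - k s) := by
    have := coeval_mem St ρ hρ a (lA St R a) (fun s => k s - k s) 0
    simpa using this
  have h2 := mpow_pi_ne St (lA St R a) k
  have h3 := rho_pow_ne St ρ hρ ⌊(lA St R a : ℝ) * r⌋₊
  rw [eD, dco, h1]
  refine mul_ne_zero h3 (div_ne_zero ?_ h2)
  simp [mchoose, mpow]

theorem inj_zero (St : Setting S O E) (R : RepSystem St) (ρ : O →+* E)
    (hρ : ∀ z : O, ‖ρ z‖ = St.ν z) (r : ℝ) (hr : 0 ≤ r) (b : Ix St R r → E) (hb : c0Fun b)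
    (h : ∀ z, ∑' j, b j * ebasis St R ρ r j.1.1 j.1.2 z = 0) : ∀ (n : ℕ) (j : Ix St R r),
      lA St R j.1.1 = n → b j = 0 := by
  have hcr := forward_isCr St R ρ hρ r hr b hb
  simp only [h] at hcr
  intro n
  induction n using Nat.strong_induction_on with
  | _ n ih =>
    rintro ⟨⟨a, k⟩, ha, hk⟩ hn
    have hD := D_unique St r hr _ hcr k hk a
    rw [Dsum] at hD
    have hD := (mul_eq_zero.1 hD).resolve_left (mfact_ne k)
    rw [tsum_eq_single (⟨(a, k), ha, hk⟩ : Ix St R r)] at hD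
    · exact (mul_eq_zero.1 hD).resolve_right (eD_self_ne St R ρ hρ r a k)
    · rintro ⟨⟨a', i⟩, ha', hi⟩ hne
      by_cases hl : lA St R a' < n
      · rw [ih _ hl ⟨⟨a', i⟩, ha', hi⟩ rfl, zero_mul]
      · by_cases haa : a' = a
        · subst haa
          have : i ≠ k := by
            rintro rfl
            exact hne rfl
          simp only [eD_self St R ρ hρ r a' i k this, mul_zero]
        · have : ¬ ∃ y, a = a' + St.ϖ ^ (lA St R a') * y := by
            rintro ⟨y, hy⟩
            apply haa
            refine rep_unique St R (lA_mem St R ha') ?_ hy (y' := 0) (by simp)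
            refine A_mono St R ?_ (lA_mem St R ha)
            simp only at hn
            omega
          simp only [eD, dco, coeval_not_mem St _ _ _ _ this]
          simp

theorem inj (St : Setting S O E) (R : RepSystem St) (ρ : O →+* E)
    (hρ : ∀ z : O, ‖ρ z‖ = St.ν z) (r : ℝ) (hr : 0 ≤ r) (b₁ b₂ : Ix St R r → E)
    (h₁ : c0Fun b₁) (h₂ : c0Fun b₂)
    (h : ∀ z, ∑' j, b₁ j * ebasis St R ρ r j.1.1 j.1.2 z =
      ∑' j, b₂ j * ebasis St R ρ r j.1.1 j.1.2 z) : b₁ = b₂ := by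
  have hb : c0Fun (fun j => b₁ j - b₂ j) := by
    intro ε hε
    refine ((h₁ ε hε).union (h₂ ε hε)).subset fun j hj => ?_
    have h3 : ε ≤ ‖b₁ j - b₂ j‖ := hj
    rw [sub_eq_add_neg] at h3
    have h4 := h3.trans (St.norm_add_max _ _)
    rw [norm_neg] at h4
    exact le_max_iff.1 h4
  have h0 := inj_zero St R ρ hρ r hr _ hb (by
    intro z
    have s1 := (c0_summable St b₁ (fun j => ebasis St R ρ r j.1.1 j.1.2 z) h₁ 1
      (fun j => norm_ebasis_le St R ρ hρ r _ _ _)).hasSum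
    have s2 := (c0_summable St b₂ (fun j => ebasis St R ρ r j.1.1 j.1.2 z) h₂ 1
      (fun j => norm_ebasis_le St R ρ hρ r _ _ _)).hasSum
    have s3 := (s1.sub s2).tsum_eq
    rw [h z, sub_self] at s3
    rw [← s3]
    exact tsum_congr fun j => by ring)
  funext j
  exact sub_eq_zero.1 (h0 _ j rfl)

end injective

/-! ### Surjectivity -/

section surjective

theorem one_le_q_rpow (St : Setting S O E) (r : ℝ) (hr : 0 ≤ r) (h : ℕ) :
    1 ≤ St.q ^ (r * (h : ℝ)) :=
  Real.one_le_rpow (q_gt_one St).le (by positivity)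

theorem eps_le_of_mul (St : Setting S O E) (r : ℝ) (h : ℕ) (t ε : ℝ)
    (hle : t * St.q ^ (r * (h : ℝ)) ≤ ε) : t ≤ ε * (St.q⁻¹ ^ h) ^ r := by
  have h3 := qn_rpow_mul St r h
  have h4 := Real.rpow_nonneg (qn_pos St h).le r
  calc t = (t * St.q ^ (r * (h : ℝ))) * (St.q⁻¹ ^ h) ^ r := by
        rw [mul_assoc, mul_comm (St.q ^ _), h3, mul_one]
    _ ≤ _ := mul_le_mul_of_nonneg_right hle h4

theorem eps_zero (St : Setting S O E) (r : ℝ) (hr : 0 ≤ r) (f : O → E)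
    (D : (S → ℕ) → O → E) (hf : IsCrWith St r f D) (x y : O) (hy : St.ν y = 0) :
    epsTay St ⌊r⌋₊ f D x y = 0 := by
  have h0 : ‖epsTay St ⌊r⌋₊ f D x y‖ ≤ 0 := by
    refine le_of_forall_pos_le_add fun ε hε => ?_
    obtain ⟨M, hM⟩ := hf.2 ε hε
    obtain ⟨z, hz⟩ := (St.mem_ball_iff y M).2 (by rw [hy]; exact (qn_pos St M).le)
    have h1 := hM M le_rfl x z
    rw [← hz] at h1
    rw [zero_add]
    exact (le_mul_of_one_le_right (norm_nonneg _) (one_le_q_rpow St r hr M)).trans h1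
  exact norm_le_zero_iff.1 h0

theorem eps_bdd (St : Setting S O E) (ρ : O →+* E) (hρ : ∀ z : O, ‖ρ z‖ = St.ν z)
    (r : ℝ) (hr : 0 ≤ r) (f : O → E)
    (D : (S → ℕ) → O → E) (hf : IsCrWith St r f D) :
    ∃ B : ℝ, 0 ≤ B ∧ ∀ x y : O, ‖epsTay St ⌊r⌋₊ f D x y‖ / St.ν y ^ r ≤ B := by
  have hq := q_pos St
  have hD : ∀ i, ∃ C : ℝ, i ∈ Idx S ⌊r⌋₊ → ∀ x : O, ‖D i x‖ ≤ C := by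
    intro i
    by_cases hi : i ∈ Idx S ⌊r⌋₊
    · obtain ⟨C, hC⟩ := hf.1 i hi
      exact ⟨C, fun _ => hC⟩
    · exact ⟨0, fun h => absurd h hi⟩
  choose C hC using hD
  obtain ⟨B1, hB1⟩ : ∃ B1 : ℝ, B1 = ∑ i ∈ Idx S ⌊r⌋₊, C i / ‖(mfact i : E)‖ := ⟨_, rfl⟩
  have hsum : ∀ x y, ‖∑ i ∈ Idx S ⌊r⌋₊, D i x * mpow St y i / (mfact i : E)‖ ≤ B1 := by
    intro x y
    rw [hB1]
    refine norm_sum_le_of_le _ fun i hi => ?_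
    rw [norm_div, norm_mul]
    refine div_le_div_of_nonneg_right ?_ (norm_nonneg _)
    exact (mul_le_of_le_one_right (norm_nonneg _) (norm_mpow_le_one St _ _)).trans (hC i hi x)
  have hB10 : 0 ≤ B1 := (norm_nonneg _).trans (hsum 0 0)
  obtain ⟨M, hM⟩ := hf.2 1 one_pos
  have hfb : ∀ x, ‖f x‖ ≤ B1 := by
    intro x
    have h1 := eps_zero St r hr f D hf x 0 (ν_zero St ρ hρ)
    rw [epsTay, sub_eq_zero, add_zero] at h1
    rw [h1]
    exact hsum x 0
  have heb : ∀ x y, ‖epsTay St ⌊r⌋₊ f D x y‖ ≤ 2 * B1 := by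
    intro x y
    rw [epsTay]
    refine (norm_sub_le _ _).trans ?_
    linarith [hfb (x + y), hsum x y]
  have hsM := Real.rpow_pos_of_pos (qn_pos St M) r
  have hqr := Real.rpow_pos_of_pos hq r
  have hp1 : 0 ≤ 2 * B1 / (St.q⁻¹ ^ M) ^ r := by positivity
  refine ⟨2 * B1 / (St.q⁻¹ ^ M) ^ r + St.q ^ r, by positivity, fun x y => ?_⟩
  rcases (ν_nonneg St ρ hρ y).eq_or_lt with hy | hy
  · rw [eps_zero St r hr f D hf x y hy.symm]
    simp only [norm_zero, zero_div]
    positivity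
  · obtain ⟨h, h1, h2⟩ := exists_nat_pow_near_of_lt_one hy (ν_le_one St y)
      (inv_pos.2 hq) (inv_lt_one_of_one_lt₀ (q_gt_one St))
    have hyr := Real.rpow_pos_of_pos hy r
    by_cases hh : M ≤ h
    · obtain ⟨z, hz⟩ := (St.mem_ball_iff y h).2 h2
      have h3 := hM h hh x z
      rw [← hz] at h3
      have h4 := eps_le_of_mul St r h _ _ h3
      have h5 : (St.q⁻¹ ^ (h + 1)) ^ r ≤ St.ν y ^ r :=
        Real.rpow_le_rpow (qn_pos St _).le h1.le hr
      rw [pow_succ, Real.mul_rpow (qn_pos St h).le (inv_pos.2 hq).le, Real.inv_rpow hq.le,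
        ← div_eq_mul_inv, div_le_iff₀ hqr] at h5
      have : ‖epsTay St ⌊r⌋₊ f D x y‖ / St.ν y ^ r ≤ St.q ^ r := by
        rw [div_le_iff₀ hyr]
        linarith
      linarith
    · have h5 : (St.q⁻¹ ^ M) ^ r ≤ St.ν y ^ r := by
        refine Real.rpow_le_rpow (qn_pos St _).le ?_ hr
        refine le_trans ?_ h1.le
        exact pow_le_pow_of_le_one (inv_pos.2 hq).le
          (inv_le_one_of_one_le₀ (q_gt_one St).le) (by omega)
      have : ‖epsTay St ⌊r⌋₊ f D x y‖ / St.ν y ^ r ≤ 2 * B1 / (St.q⁻¹ ^ M) ^ r :=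
        div_le_div₀ (by positivity) (heb x y) hsM h5
      linarith

theorem CrNorm_nonneg (St : Setting S O E) (ρ : O →+* E) (hρ : ∀ z : O, ‖ρ z‖ = St.ν z)
    (r : ℝ) (f : O → E) (D : (S → ℕ) → O → E) :
    0 ≤ CrNorm St r f D := by
  refine le_max_of_le_right ?_
  exact Real.iSup_nonneg fun x => Real.iSup_nonneg fun y =>
    div_nonneg (norm_nonneg _) (Real.rpow_nonneg (ν_nonneg St ρ hρ y) _)

theorem eps_le_CrNorm (St : Setting S O E) (ρ : O →+* E) (hρ : ∀ z : O, ‖ρ z‖ = St.ν z)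
    (r : ℝ) (hr : 0 ≤ r) (f : O → E)
    (D : (S → ℕ) → O → E) (hf : IsCrWith St r f D) (h : ℕ) (x z : O) :
    ‖epsTay St ⌊r⌋₊ f D x (St.ϖ ^ h * z)‖ ≤ CrNorm St r f D * (St.q⁻¹ ^ h) ^ r := by
  have hC0 := CrNorm_nonneg St ρ hρ r f D
  have hs := Real.rpow_nonneg (qn_pos St h).le r
  obtain ⟨B, hB0, hB⟩ := eps_bdd St ρ hρ r hr f D hf
  obtain ⟨y, hy⟩ : ∃ y, y = St.ϖ ^ h * z := ⟨_, rfl⟩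
  have hyh := (St.mem_ball_iff y h).1 ⟨z, hy⟩
  rw [← hy]
  have hle : ‖epsTay St ⌊r⌋₊ f D x y‖ / St.ν y ^ r ≤ CrNorm St r f D := by
    refine le_max_of_le_right ?_
    have h1 : ‖epsTay St ⌊r⌋₊ f D x y‖ / St.ν y ^ r ≤
        ⨆ y : O, ‖epsTay St ⌊r⌋₊ f D x y‖ / St.ν y ^ r :=
      le_ciSup (f := fun y => ‖epsTay St ⌊r⌋₊ f D x y‖ / St.ν y ^ r)
        ⟨B, by rintro _ ⟨y, rfl⟩; exact hB x y⟩ y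
    refine h1.trans ?_
    exact le_ciSup (f := fun x => ⨆ y : O, ‖epsTay St ⌊r⌋₊ f D x y‖ / St.ν y ^ r)
      ⟨B, by rintro _ ⟨x, rfl⟩; exact Real.iSup_le (fun y => hB x y) hB0⟩ x
  rcases (ν_nonneg St ρ hρ y).eq_or_lt with hy0 | hy0
  · rw [eps_zero St r hr f D hf x y hy0.symm, norm_zero]
    positivity
  · have hyr := Real.rpow_pos_of_pos hy0 r
    rw [div_le_iff₀ hyr] at hle
    exact hle.trans (mul_le_mul_of_nonneg_left (Real.rpow_le_rpow hy0.le hyh hr) hC0)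

theorem D_le_CrNorm (St : Setting S O E)
    (r : ℝ) (f : O → E)
    (D : (S → ℕ) → O → E) (hf : IsCrWith St r f D) (x : O) (i : S → ℕ) (hi : i ∈ Idx S ⌊r⌋₊) :
    ‖D i x / (mfact i : E)‖ ≤ CrNorm St r f D := by
  refine le_max_of_le_left ?_
  obtain ⟨C, hC⟩ := hf.1 i hi
  have h1 : ‖D i x / (mfact i : E)‖ ≤ ⨆ x : O, ‖D i x / (mfact i : E)‖ := by
    refine le_ciSup (f := fun x => ‖D i x / (mfact i : E)‖) ⟨C / ‖(mfact i : E)‖, ?_⟩ x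
    rintro _ ⟨x, rfl⟩
    simp only [norm_div]
    exact div_le_div_of_nonneg_right (hC x) (norm_nonneg _)
  refine h1.trans ?_
  exact le_ciSup (f := fun i : Idx S ⌊r⌋₊ => ⨆ x : O, ‖D i.1 x / (mfact i.1 : E)‖)
    (Set.finite_range _).bddAbove ⟨i, hi⟩

theorem recenter (St : Setting S O E) (N : ℕ) (f : O → E) (D : (S → ℕ) → O → E)
    (h : ℕ) (a' u : O) : ∃ c : (S → ℕ) → E, ∀ w : O, ∑ k ∈ Idx S N, c k * mpow St w k =
      epsTay St N f D a' (St.ϖ ^ h * (u + w)) -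
        epsTay St N f D (a' + St.ϖ ^ h * u) (St.ϖ ^ h * w) := by
  refine ⟨fun k => D k (a' + St.ϖ ^ h * u) / (mfact k : E) * mpow St (St.ϖ ^ h) k -
    ∑ i ∈ Idx S N, D i a' / (mfact i : E) * mpow St (St.ϖ ^ h) i *
      ((mchoose i k : E) * mpow St u (fun s => i s - k s)), fun w => ?_⟩
  have h1 : ∑ i ∈ Idx S N, D i a' * mpow St (St.ϖ ^ h * (u + w)) i / (mfact i : E) =
      ∑ k ∈ Idx S N, (∑ i ∈ Idx S N, D i a' / (mfact i : E) * mpow St (St.ϖ ^ h) i *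
      ((mchoose i k : E) * mpow St u (fun s => i s - k s))) * mpow St w k := by
    simp_rw [Finset.sum_mul]
    rw [Finset.sum_comm]
    refine Finset.sum_congr rfl fun i hi => ?_
    rw [mpow_mul, mpow_add St N i hi, Finset.mul_sum, Finset.mul_sum, Finset.sum_div]
    refine Finset.sum_congr rfl fun k _ => by ring
  have h2 : ∑ i ∈ Idx S N, D i (a' + St.ϖ ^ h * u) * mpow St (St.ϖ ^ h * w) i / (mfact i : E) =
      ∑ k ∈ Idx S N, D k (a' + St.ϖ ^ h * u) / (mfact k : E) * mpow St (St.ϖ ^ h) k *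
        mpow St w k := by
    refine Finset.sum_congr rfl fun k _ => ?_
    rw [mpow_mul]
    ring
  have h3 : a' + St.ϖ ^ h * (u + w) = a' + St.ϖ ^ h * u + St.ϖ ^ h * w := by ring
  rw [epsTay, epsTay, h1, h2, h3]
  simp only [sub_mul, Finset.sum_sub_distrib]
  ring

theorem zero_mem_A (St : Setting S O E) (R : RepSystem St) (h : ℕ) : (0 : O) ∈ R.A h :=
  A_mono St R (Nat.zero_le h) (by rw [R.hA0]; simp)

theorem lA_eq (St : Setting S O E) (R : RepSystem St) {a : O} {h : ℕ} (h1 : a ∈ R.A (h + 1))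
    (h2 : a ∉ R.A h) : lA St R a = h + 1 := by
  refine le_antisymm (lA_le St R h1) ?_
  by_contra hlt
  apply h2
  have := lA_mem St R (Set.mem_iUnion.2 ⟨h + 1, h1⟩ : a ∈ Aall St R)
  exact A_mono St R (by omega) this

theorem lA_zero (St : Setting S O E) (R : RepSystem St) : lA St R 0 = 0 :=
  Nat.le_zero.1 (lA_le St R (zero_mem_A St R 0))

theorem ebasis_mem (St : Setting S O E) (R : RepSystem St) (ρ : O →+* E)
    (hρ : ∀ z : O, ‖ρ z‖ = St.ν z) (r : ℝ) (a : O) (i : S → ℕ) (h : ℕ) (hl : lA St R a = h)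
    (w : O) : ebasis St R ρ r a i (a + St.ϖ ^ h * w) = ρ St.ϖ ^ ⌊(h : ℝ) * r⌋₊ * mpow St w i := by
  subst hl
  rw [ebasis, coeval_mem St ρ hρ]

theorem exists_beta (St : Setting S O E) (R : RepSystem St) (ρ : O →+* E)
    (hρ : ∀ z : O, ‖ρ z‖ = St.ν z) (r : ℝ) (hr : 0 ≤ r) (f : O → E) (D : (S → ℕ) → O → E)
    (K : ℝ) (hc : ∀ (c : (S → ℕ) → E) (M : ℝ),
      (∀ w : O, ‖∑ i ∈ Idx S ⌊r⌋₊, c i * mpow St w i‖ ≤ M) → ∀ i ∈ Idx S ⌊r⌋₊, ‖c i‖ ≤ K * M) :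
    ∃ β : O → (S → ℕ) → E, (∀ i, β 0 i = D i 0 / (mfact i : E)) ∧
      ∀ (h : ℕ) (a : O), a ∈ R.A (h + 1) → a ∉ R.A h → ∃ a' ∈ R.A h, ∃ u : O,
        a = a' + St.ϖ ^ h * u ∧
        (∀ w : O, ∑ i ∈ Idx S ⌊r⌋₊, β a i * ebasis St R ρ r a i (a + St.ϖ ^ (h + 1) * w) =
          epsTay St ⌊r⌋₊ f D a' (St.ϖ ^ h * (u + St.ϖ * w)) -
            epsTay St ⌊r⌋₊ f D a (St.ϖ ^ (h + 1) * w)) ∧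
        ∀ M : ℝ, (∀ x z : O, ‖epsTay St ⌊r⌋₊ f D x (St.ϖ ^ h * z)‖ ≤ M) →
          ∀ i ∈ Idx S ⌊r⌋₊, ‖β a i‖ * (St.q⁻¹ ^ (h + 1)) ^ r ≤ K * M := by
  have main : ∀ a : O, ∃ g : (S → ℕ) → E, (a = 0 → ∀ i, g i = D i 0 / (mfact i : E)) ∧
      ∀ h : ℕ, a ∈ R.A (h + 1) → a ∉ R.A h → ∃ a' ∈ R.A h, ∃ u : O,
        a = a' + St.ϖ ^ h * u ∧
        (∀ w : O, ∑ i ∈ Idx S ⌊r⌋₊, g i * ebasis St R ρ r a i (a + St.ϖ ^ (h + 1) * w) =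
          epsTay St ⌊r⌋₊ f D a' (St.ϖ ^ h * (u + St.ϖ * w)) -
            epsTay St ⌊r⌋₊ f D a (St.ϖ ^ (h + 1) * w)) ∧
        ∀ M : ℝ, (∀ x z : O, ‖epsTay St ⌊r⌋₊ f D x (St.ϖ ^ h * z)‖ ≤ M) →
          ∀ i ∈ Idx S ⌊r⌋₊, ‖g i‖ * (St.q⁻¹ ^ (h + 1)) ^ r ≤ K * M := by
    intro a
    by_cases ha : a = 0
    · exact ⟨fun i => D i 0 / (mfact i : E), fun _ _ => rfl,
        fun h _ hn => absurd (ha ▸ zero_mem_A St R h) hn⟩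
    by_cases hex : ∃ h, a ∈ R.A (h + 1) ∧ a ∉ R.A h
    · obtain ⟨h, h1, h2⟩ := hex
      have hl := lA_eq St R h1 h2
      obtain ⟨a', ⟨ha', u, hu⟩, -⟩ := R.hrep h a
      obtain ⟨c, hcw⟩ := recenter St ⌊r⌋₊ f D h a' u
      have hρ0 := rho_pow_ne St ρ hρ ⌊((h + 1 : ℕ) : ℝ) * r⌋₊
      refine ⟨fun i => c i * mpow St St.ϖ i / ρ St.ϖ ^ ⌊((h + 1 : ℕ) : ℝ) * r⌋₊,
        fun h0 => absurd h0 ha, ?_⟩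
      intro h' h1' h2'
      have hl' := lA_eq St R h1' h2'
      obtain rfl : h = h' := by omega
      refine ⟨a', ha', u, hu, ?_, ?_⟩
      · intro w
        have h3 := hcw (St.ϖ * w)
        rw [← hu] at h3
        rw [pow_succ, mul_assoc (St.ϖ ^ h), ← h3]
        refine Finset.sum_congr rfl fun i _ => ?_
        rw [← mul_assoc, ← pow_succ, ebasis_mem St R ρ hρ r a i (h + 1) hl, mpow_mul]
        field_simp
      · intro M hM i hi
        have := ultra St
        have h4 := hc c M (by
          intro w
          rw [hcw w, sub_eq_add_neg]
          refine (St.norm_add_max _ _).trans (max_le (hM _ _) ?_)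
          rw [norm_neg]
          exact hM _ _) i hi
        have h5 := norm_rho_pow_ge St ρ hρ r hr (h + 1)
        have h6 := norm_pos_iff.2 hρ0
        rw [norm_div, norm_mul, div_mul_eq_mul_div, div_le_iff₀ h6]
        have h7 := norm_mpow_le_one St St.ϖ i
        have h8 : 0 ≤ K * M := (norm_nonneg _).trans h4
        calc _ ≤ (K * M * 1) * ‖ρ St.ϖ ^ ⌊((h + 1 : ℕ) : ℝ) * r⌋₊‖ := by
              refine mul_le_mul (mul_le_mul h4 h7 (norm_nonneg _) h8) h5
                (Real.rpow_nonneg (qn_pos St _).le _) (by simpa using h8)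
          _ = _ := by ring
    · exact ⟨0, fun h0 => absurd h0 ha, fun h h1 h2 => absurd ⟨h, h1, h2⟩ hex⟩
  choose β hβ1 hβ2 using main
  exact ⟨β, hβ1 0 rfl, fun h a => hβ2 a h⟩

theorem ebasis_not_mem (St : Setting S O E) (R : RepSystem St) (ρ : O →+* E)
    (r : ℝ) (a : O) (i : S → ℕ) (h : ℕ) (hl : lA St R a = h)
    (z : O) (hz : ¬ ∃ y, z = a + St.ϖ ^ h * y) : ebasis St R ρ r a i z = 0 := by
  subst hl
  rw [ebasis, coeval_not_mem St _ _ _ _ hz, mul_zero]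

theorem backward (St : Setting S O E) (R : RepSystem St) (ρ : O →+* E)
    (hρ : ∀ z : O, ‖ρ z‖ = St.ν z) (r : ℝ) (hr : 0 ≤ r)
    (K : ℝ) (hK : 0 ≤ K) (hc : ∀ (c : (S → ℕ) → E) (M : ℝ),
      (∀ w : O, ‖∑ i ∈ Idx S ⌊r⌋₊, c i * mpow St w i‖ ≤ M) → ∀ i ∈ Idx S ⌊r⌋₊, ‖c i‖ ≤ K * M)
    (f : O → E) (D : (S → ℕ) → O → E) (hf : IsCrWith St r f D) :
    ∃ b : Ix St R r → E, c0Fun b ∧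
      (∀ z : O, f z = ∑' x, b x * ebasis St R ρ r x.1.1 x.1.2 z) ∧
      (⨆ x, ‖b x‖) ≤ (1 + K * St.q ^ r) * CrNorm St r f D := by
  have hq := q_pos St
  have hqr := Real.rpow_pos_of_pos hq r
  have hC0 := CrNorm_nonneg St ρ hρ r f D
  obtain ⟨β, hβ0, hβ⟩ := exists_beta St R ρ hρ r hr f D K hc
  -- bounds
  have hbound : ∀ (h : ℕ) (a : O), a ∈ R.A (h + 1) → a ∉ R.A h → ∀ C : ℝ,
      (∀ x z : O, ‖epsTay St ⌊r⌋₊ f D x (St.ϖ ^ h * z)‖ ≤ C * (St.q⁻¹ ^ h) ^ r) →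
      ∀ i ∈ Idx S ⌊r⌋₊, ‖β a i‖ ≤ K * St.q ^ r * C := by
    intro h a h1 h2 C hC i hi
    obtain ⟨a', -, u, -, -, h3⟩ := hβ h a h1 h2
    have h4 := h3 _ hC i hi
    have h5 := Real.rpow_pos_of_pos (qn_pos St h) r
    rw [pow_succ, Real.mul_rpow (qn_pos St h).le (inv_pos.2 hq).le, Real.inv_rpow hq.le] at h4
    have h6 : ‖β a i‖ * (St.q ^ r)⁻¹ ≤ K * C := by
      refine le_of_mul_le_mul_right ?_ h5
      calc _ = ‖β a i‖ * ((St.q⁻¹ ^ h) ^ r * (St.q ^ r)⁻¹) := by ring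
        _ ≤ _ := h4
        _ = _ := by ring
    rw [← div_eq_mul_inv, div_le_iff₀ hqr] at h6
    linarith
  have hlevel : ∀ a ∈ Aall St R, a = 0 ∨ ∃ h, lA St R a = h + 1 ∧ a ∈ R.A (h + 1) ∧ a ∉ R.A h := by
    intro a ha
    have h1 := lA_mem St R ha
    rcases Nat.eq_zero_or_eq_succ_pred (lA St R a) with h0 | h0
    · left
      rw [h0, R.hA0] at h1
      simpa using h1
    · right
      refine ⟨(lA St R a).pred, h0, ?_, ?_⟩
      · rw [← Nat.succ_eq_add_one, ← h0]
        exact h1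
      · intro h2
        have := lA_le St R h2
        omega
  have hc0 : c0Fun (fun x : Ix St R r => β x.1.1 x.1.2) := by
    intro ε hε
    obtain ⟨M, hM⟩ := hf.2 (ε / 2 / (K * St.q ^ r + 1)) (by positivity)
    have hfin : ((R.A (M + 1) ×ˢ Idx S ⌊r⌋₊ : Finset (O × (S → ℕ))) : Set (O × (S → ℕ))).Finite :=
      Finset.finite_toSet _
    refine (hfin.preimage (f := fun x : Ix St R r => x.1) Subtype.val_injective.injOn).subset ?_
    rintro ⟨⟨a, i⟩, ha, hi⟩ hx
    simp only [Set.mem_preimage, Finset.mem_coe, Finset.mem_product]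
    refine ⟨?_, hi⟩
    rcases hlevel a ha with h0 | ⟨h, hl, h1, h2⟩
    · rw [h0]
      exact zero_mem_A St R _
    · by_cases hMh : M ≤ h
      · exfalso
        have h3 := hbound h a h1 h2 _
          (fun x z => eps_le_of_mul St r h _ _ (hM h hMh x z)) i hi
        have h4 : ε ≤ ‖β a i‖ := hx
        have h5 : K * St.q ^ r * (ε / 2 / (K * St.q ^ r + 1)) ≤ ε / 2 := by
          rw [mul_div_assoc', div_le_iff₀ (by positivity)]
          nlinarith [mul_nonneg hK hqr.le]
        linarith
      · exact A_mono St R (by omega) h1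
  refine ⟨fun x => β x.1.1 x.1.2, hc0, fun z => ?_, ?_⟩
  · -- partial sums
    have hpart : ∀ (h : ℕ) (a y : O), a ∈ R.A h → z = a + St.ϖ ^ h * y →
        ∑ a ∈ R.A h, ∑ i ∈ Idx S ⌊r⌋₊, β a i * ebasis St R ρ r a i z =
          f z - epsTay St ⌊r⌋₊ f D a (St.ϖ ^ h * y) := by
      intro h
      induction h with
      | zero =>
        intro a y ha hz
        rw [R.hA0] at ha ⊢
        have ha : a = 0 := by simpa using ha
        subst ha
        rw [Finset.sum_singleton, epsTay, ← hz, sub_sub_cancel]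
        refine Finset.sum_congr rfl fun i _ => ?_
        rw [hβ0]
        have := ebasis_mem St R ρ hρ r 0 i 0 (lA_zero St R) y
        rw [← hz] at this
        rw [this]
        simp
        ring
      | succ h ih =>
        intro a y ha hz
        rw [← Finset.sum_sdiff (R.hmono h)]
        by_cases hah : a ∈ R.A h
        · have hz' : z = a + St.ϖ ^ h * (St.ϖ * y) := by rw [hz]; ring
          rw [ih a (St.ϖ * y) hah hz', Finset.sum_eq_zero, zero_add]
          · ring_nf
          · intro a2 ha2
            rw [Finset.mem_sdiff] at ha2
            refine Finset.sum_eq_zero fun i _ => ?_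
            rw [ebasis_not_mem St R ρ r a2 i (h + 1) (lA_eq St R ha2.1 ha2.2), mul_zero]
            rintro ⟨y2, hy2⟩
            exact ha2.2 (rep_unique St R ha ha2.1 hz hy2 ▸ hah)
        · obtain ⟨a', ha', u, hu, h3, -⟩ := hβ h a ha hah
          have hz' : z = a' + St.ϖ ^ h * (u + St.ϖ * y) := by rw [hz, hu]; ring
          rw [ih a' _ ha' hz', Finset.sum_eq_single a]
          · have h4 := h3 y
            rw [← hz] at h4
            rw [h4]
            ring
          · intro a2 ha2 hne
            rw [Finset.mem_sdiff] at ha2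
            refine Finset.sum_eq_zero fun i _ => ?_
            rw [ebasis_not_mem St R ρ r a2 i (h + 1) (lA_eq St R ha2.1 ha2.2), mul_zero]
            rintro ⟨y2, hy2⟩
            exact hne (rep_unique St R ha2.1 ha hy2 hz)
          · intro hn
            exact absurd (Finset.mem_sdiff.2 ⟨ha, hah⟩) hn
    have hsum := (c0_summable St _ (fun j : Ix St R r => ebasis St R ρ r j.1.1 j.1.2 z) hc0 1
      (fun j => norm_ebasis_le St R ρ hρ r _ _ _)).hasSum
    let F : ℕ → Finset (Ix St R r) := fun h =>
      (R.A h ×ˢ Idx S ⌊r⌋₊).subtype (fun x => x.1 ∈ Aall St R ∧ x.2 ∈ Idx S ⌊r⌋₊)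
    have hF : Filter.Tendsto F Filter.atTop Filter.atTop := by
      refine Filter.tendsto_atTop_finset_of_monotone ?_ ?_
      · intro m n hmn x hx
        simp only [F, Finset.mem_subtype, Finset.mem_product] at hx ⊢
        exact ⟨A_mono St R hmn hx.1, hx.2⟩
      · rintro ⟨⟨a, i⟩, ha, hi⟩
        refine ⟨lA St R a, ?_⟩
        simp only [F, Finset.mem_subtype, Finset.mem_product]
        exact ⟨lA_mem St R ha, hi⟩
    have hlim := Filter.Tendsto.comp hsum hF
    have hFs : ∀ h, ∑ x ∈ F h, β x.1.1 x.1.2 * ebasis St R ρ r x.1.1 x.1.2 z =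
        ∑ a ∈ R.A h, ∑ i ∈ Idx S ⌊r⌋₊, β a i * ebasis St R ρ r a i z := by
      intro h
      rw [← Finset.sum_product']
      refine Finset.sum_subtype_of_mem
        (fun x : O × (S → ℕ) => β x.1 x.2 * ebasis St R ρ r x.1 x.2 z) ?_
      intro x hx
      rw [Finset.mem_product] at hx
      exact ⟨Set.mem_iUnion.2 ⟨h, hx.1⟩, hx.2⟩
    refine tendsto_nhds_unique ?_ hlim
    rw [Metric.tendsto_atTop]
    intro ε hε
    obtain ⟨M, hM⟩ := hf.2 (ε / 2) (by positivity)
    refine ⟨M, fun h hh => ?_⟩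
    obtain ⟨a, ⟨ha, y, hy⟩, -⟩ := R.hrep h z
    have h1 := hpart h a y ha hy
    rw [← hFs] at h1
    simp only [Function.comp]
    rw [h1, dist_eq_norm]
    have h2 := hM h hh a y
    have h3 := (le_mul_of_one_le_right (norm_nonneg _) (one_le_q_rpow St r hr h)).trans h2
    rw [sub_sub_cancel_left, norm_neg]
    linarith
  · have hKq : 0 ≤ K * St.q ^ r := by positivity
    refine Real.iSup_le ?_ (by positivity)
    rintro ⟨⟨a, i⟩, ha, hi⟩
    simp only
    rcases hlevel a ha with h0 | ⟨h, hl, h1, h2⟩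
    · rw [h0, hβ0]
      have := D_le_CrNorm St r f D hf 0 i hi
      nlinarith
    · have := hbound h a h1 h2 _ (fun x z => eps_le_CrNorm St ρ hρ r hr f D hf h x z) i hi
      nlinarith

end surjective

/-- the family `(e_{a,i,r})_{a ∈ A, i ∈ I_{≤[r]}}` is a Banach basis of
`C^r(O,E)`: the map `c₀(A × I_{≤[r]}) → C^r(O,E)`, `(b_{a,i}) ↦ ∑ b_{a,i} e_{a,i,r}`, is an
isomorphism of Banach spaces (well defined and bounded, bijective onto `C^r(O,E)`, with
bounded inverse). -/
theorem statement14 (St : Setting S O E) (R : RepSystem St) (ρ : O →+* E)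
    (hρ : ∀ z : O, ‖ρ z‖ = St.ν z) (r : ℝ) (hr : 0 ≤ r) :
    ∃ C₁ C₂ : ℝ, 0 ≤ C₁ ∧ 0 ≤ C₂ ∧
      (∀ b : {x : O × (S → ℕ) // x.1 ∈ Aall St R ∧ x.2 ∈ Idx S ⌊r⌋₊} → E, c0Fun b →
        ∃ D, IsCrWith St r (fun z => ∑' x, b x * ebasis St R ρ r x.1.1 x.1.2 z) D ∧
          CrNorm St r (fun z => ∑' x, b x * ebasis St R ρ r x.1.1 x.1.2 z) D ≤
            C₁ * ⨆ x, ‖b x‖) ∧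
      (∀ (f : O → E) (D : (S → ℕ) → O → E), IsCrWith St r f D →
        ∃ b : {x : O × (S → ℕ) // x.1 ∈ Aall St R ∧ x.2 ∈ Idx S ⌊r⌋₊} → E, c0Fun b ∧
          (∀ z : O, f z = ∑' x, b x * ebasis St R ρ r x.1.1 x.1.2 z) ∧
          (⨆ x, ‖b x‖) ≤ C₂ * CrNorm St r f D) ∧
      (∀ b₁ b₂ : {x : O × (S → ℕ) // x.1 ∈ Aall St R ∧ x.2 ∈ Idx S ⌊r⌋₊} → E,
        c0Fun b₁ → c0Fun b₂ →
        (∀ z : O, (∑' x, b₁ x * ebasis St R ρ r x.1.1 x.1.2 z) =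
          ∑' x, b₂ x * ebasis St R ρ r x.1.1 x.1.2 z) →
        b₁ = b₂) := by
  obtain ⟨K, hK, hc⟩ := coeff_bound St ⌊r⌋₊
  have hq := q_pos St
  have hqr := Real.rpow_pos_of_pos hq r
  exact ⟨St.q, 1 + K * St.q ^ r, hq.le, by positivity,
    fun b hb => ⟨Dsum St R ρ r b, forward_isCr St R ρ hρ r hr b hb,
      forward_norm St R ρ hρ r hr b hb⟩,
    fun f D hf => backward St R ρ hρ r hr K hK hc f D hf,
    fun b₁ b₂ h₁ h₂ h => inj St R ρ hρ r hr b₁ b₂ h₁ h₂ h⟩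

end CrPaper
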